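/- arXiv:2303.14810 — 2 statements merged into one kernel-verified Lean document; each statement's English description precedes it below -/
import Mathlib

section
/- For all a, b, c ∈ ℕ and every finite simple graph G, the inequality w_{2a+c}(G) · w_{2(a+b)+c}(G) ≤ w_{2a}(G) · w_{2(a+b+c)}(G) holds, where w_j(G) denotes the number of walks of length j in G. -/
/-!
For a symmetric operator `T`, the Cauchy–Schwarz inequality gives
`‖T ^ (k + 1) x‖ ^ 2 = ⟪T ^ k x, T ^ (k + 2) x⟫ ≤ ‖T ^ k x‖ * ‖T ^ (k + 2) x‖`, so the sequence
`f k = ‖T ^ k x‖` is log-convex and `f (a + b) * f (a + c) ≤ f a * f (a + b + c)`. Cauchy–Schwarz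
also bounds the moments `⟪x, T ^ (2 * a + c) x⟫` and `⟪x, T ^ (2 * (a + b) + c) x⟫` by
`f a * f (a + c)` and `f (a + b) * f (a + b + c)`, so their product is at most
`(f a * f (a + b + c)) ^ 2`, which is the product of the moments of orders `2 * a` and
`2 * (a + b + c)`. Walk numbers are the moments of the adjacency matrix at the all-ones vector.
-/

open Finset

/-- The number of walks of length `k` in a graph `G`, computed as
`𝟙ᵀ A^k 𝟙 = ∑_{x,y} (A^k)_{x,y}` for the adjacency matrix `A`. -/
noncomputable def walkNum {V : Type*} [Fintype V] [DecidableEq V] (G : SimpleGraph V)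
    [DecidableRel G.Adj] (k : ℕ) : ℝ :=
  ∑ x : V, ∑ y : V, ((G.adjMatrix ℝ) ^ k) x y

open scoped InnerProductSpace

section LogConvex

variable {R : Type*} [CommSemiring R] [LinearOrder R] [IsStrictOrderedRing R] {f : ℕ → R}

lemma apply_succ_mul_apply_add_le_of_sq_le (hf : ∀ k, 0 ≤ f k)
    (hlc : ∀ k, f (k + 1) ^ 2 ≤ f k * f (k + 2)) (k n : ℕ) :
    f (k + 1) * f (k + n) ≤ f k * f (k + n + 1) := by
  induction n with
  | zero => exact (mul_comm _ _).le
  | succ n ih =>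
    rcases (hf (k + n + 1)).eq_or_lt' with hzero | hpos
    · simpa [← add_assoc, hzero] using mul_nonneg (hf k) (hf (k + n + 1 + 1))
    refine le_of_mul_le_mul_left ?_ hpos
    calc f (k + n + 1) * (f (k + 1) * f (k + n + 1))
        = f (k + 1) * f (k + n + 1) ^ 2 := by ring
      _ ≤ f (k + 1) * (f (k + n) * f (k + n + 2)) :=
        mul_le_mul_of_nonneg_left (hlc _) (hf _)
      _ = f (k + 1) * f (k + n) * f (k + n + 2) := by ring
      _ ≤ f k * f (k + n + 1) * f (k + n + 2) := mul_le_mul_of_nonneg_right ih (hf _)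
      _ = f (k + n + 1) * (f k * f (k + n + 2)) := by ring

lemma apply_add_mul_apply_add_le_of_sq_le (hf : ∀ k, 0 ≤ f k)
    (hlc : ∀ k, f (k + 1) ^ 2 ≤ f k * f (k + 2)) (k m n : ℕ) :
    f (k + m) * f (k + n) ≤ f k * f (k + m + n) := by
  induction n with
  | zero => exact (mul_comm _ _).le
  | succ n ih =>
    rcases (hf (k + n)).eq_or_lt' with hzero | hpos
    · have hsucc : f (k + n + 1) = 0 :=
        (hf _).eq_of_not_lt' fun hsucc_pos ↦
          (pow_pos hsucc_pos 2).not_ge (by simpa [hzero] using hlc (k + n))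
      simpa [← add_assoc, hsucc] using mul_nonneg (hf k) (hf (k + m + n + 1))
    refine le_of_mul_le_mul_left ?_ hpos
    calc f (k + n) * (f (k + m) * f (k + n + 1))
        = f (k + m) * f (k + n) * f (k + n + 1) := by ring
      _ ≤ f k * f (k + m + n) * f (k + n + 1) := mul_le_mul_of_nonneg_right ih (hf _)
      _ = f k * (f (k + n + 1) * f (k + n + m)) := by rw [add_right_comm k m n]; ring
      _ ≤ f k * (f (k + n) * f (k + n + m + 1)) :=
        mul_le_mul_of_nonneg_left (apply_succ_mul_apply_add_le_of_sq_le hf hlc _ _) (hf _)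
      _ = f (k + n) * (f k * f (k + m + n + 1)) := by rw [add_right_comm k m n]; ring

end LogConvex

section SymmetricOperator

variable {𝕜 E : Type*} [RCLike 𝕜] [SeminormedAddCommGroup E] [InnerProductSpace 𝕜 E]
  {T : E →ₗ[𝕜] E}

lemma inner_pow_add_apply (hT : T.IsSymmetric) (m n : ℕ) (x y : E) :
    ⟪x, (T ^ (m + n)) y⟫_𝕜 = ⟪(T ^ m) x, (T ^ n) y⟫_𝕜 := by
  rw [pow_add, Module.End.mul_apply, hT.pow m]

lemma norm_inner_pow_add_apply_le (hT : T.IsSymmetric) (m n : ℕ) (x y : E) :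
    ‖⟪x, (T ^ (m + n)) y⟫_𝕜‖ ≤ ‖(T ^ m) x‖ * ‖(T ^ n) y‖ :=
  inner_pow_add_apply hT m n x y ▸ norm_inner_le_norm _ _

lemma norm_inner_pow_two_mul_apply_self (hT : T.IsSymmetric) (k : ℕ) (x : E) :
    ‖⟪x, (T ^ (2 * k)) x⟫_𝕜‖ = ‖(T ^ k) x‖ ^ 2 := by
  rw [two_mul, inner_pow_add_apply hT, inner_self_eq_norm_sq_to_K]
  simp

lemma norm_pow_succ_apply_sq_le (hT : T.IsSymmetric) (x : E) (k : ℕ) :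
    ‖(T ^ (k + 1)) x‖ ^ 2 ≤ ‖(T ^ k) x‖ * ‖(T ^ (k + 2)) x‖ := by
  rw [← norm_inner_pow_two_mul_apply_self hT, show 2 * (k + 1) = k + (k + 2) by ring]
  exact norm_inner_pow_add_apply_le hT _ _ _ _

lemma norm_pow_add_apply_mul_le (hT : T.IsSymmetric) (x : E) (k m n : ℕ) :
    ‖(T ^ (k + m)) x‖ * ‖(T ^ (k + n)) x‖ ≤ ‖(T ^ k) x‖ * ‖(T ^ (k + m + n)) x‖ :=
  apply_add_mul_apply_add_le_of_sq_le (f := fun k ↦ ‖(T ^ k) x‖) (fun _ ↦ norm_nonneg _)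
    (norm_pow_succ_apply_sq_le hT x) k m n

theorem sandwich_walk_inequality_general (hT : T.IsSymmetric) (x : E) (a b c : ℕ) :
    ‖⟪x, (T ^ (2 * a + c)) x⟫_𝕜‖ * ‖⟪x, (T ^ (2 * (a + b) + c)) x⟫_𝕜‖ ≤
      ‖⟪x, (T ^ (2 * a)) x⟫_𝕜‖ * ‖⟪x, (T ^ (2 * (a + b + c))) x⟫_𝕜‖ := by
  rw [norm_inner_pow_two_mul_apply_self hT, norm_inner_pow_two_mul_apply_self hT]
  calc ‖⟪x, (T ^ (2 * a + c)) x⟫_𝕜‖ * ‖⟪x, (T ^ (2 * (a + b) + c)) x⟫_𝕜‖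
      = ‖⟪x, (T ^ (a + (a + c))) x⟫_𝕜‖ * ‖⟪x, (T ^ (a + b + (a + b + c))) x⟫_𝕜‖ := by
        simp only [two_mul, add_assoc]
    _ ≤ (‖(T ^ a) x‖ * ‖(T ^ (a + c)) x‖) * (‖(T ^ (a + b)) x‖ * ‖(T ^ (a + b + c)) x‖) := by
        gcongr <;> exact norm_inner_pow_add_apply_le hT _ _ _ _
    _ = (‖(T ^ a) x‖ * ‖(T ^ (a + b + c)) x‖) * (‖(T ^ (a + b)) x‖ * ‖(T ^ (a + c)) x‖) := by
        ring
    _ ≤ (‖(T ^ a) x‖ * ‖(T ^ (a + b + c)) x‖) * (‖(T ^ a) x‖ * ‖(T ^ (a + b + c)) x‖) := by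
        gcongr ?_ * ?_
        exact norm_pow_add_apply_mul_le hT x a b c
    _ = ‖(T ^ a) x‖ ^ 2 * ‖(T ^ (a + b + c)) x‖ ^ 2 := by ring

end SymmetricOperator

section WalkNumber

lemma inner_one_toEuclideanLin_one {𝕜 m n : Type*} [RCLike 𝕜] [Fintype m] [Fintype n]
    [DecidableEq n] (A : Matrix m n 𝕜) :
    ⟪WithLp.toLp 2 1, A.toEuclideanLin (WithLp.toLp 2 1)⟫_𝕜 = ∑ x, ∑ y, A x y := by
  simp [PiLp.inner_apply, Matrix.mulVec, dotProduct]

variable {V : Type*} [Fintype V] [DecidableEq V] (G : SimpleGraph V) [DecidableRel G.Adj]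

lemma walkNum_nonneg (k : ℕ) : 0 ≤ walkNum G k :=
  sum_nonneg fun x _ ↦ sum_nonneg fun y _ ↦ by
    rw [G.adjMatrix_pow_apply_eq_card_walk]
    positivity

lemma walkNum_eq_norm_inner (k : ℕ) :
    walkNum G k =
      ‖⟪WithLp.toLp 2 1, ((G.adjMatrix ℝ).toEuclideanLin ^ k) (WithLp.toLp 2 1)⟫_ℝ‖ := by
  rw [← Matrix.toLpLin_pow, inner_one_toEuclideanLin_one, ← walkNum,
    Real.norm_of_nonneg (walkNum_nonneg G k)]

end WalkNumber

theorem sandwich_walk_inequality (a b c : ℕ)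
    (V : Type) [Fintype V] [DecidableEq V] (G : SimpleGraph V) [DecidableRel G.Adj] :
    walkNum G (2 * a + c) * walkNum G (2 * (a + b) + c) ≤
      walkNum G (2 * a) * walkNum G (2 * (a + b + c)) := by
  simp only [walkNum_eq_norm_inner]
  exact sandwich_walk_inequality_general
    (Matrix.isSymmetric_toEuclideanLin_iff.2 (G.isHermitian_adjMatrix ℝ)) _ a b c
end

section
/- Let α, β ∈ ℕ^k and let f(x) = x_1^{β_1} ⋯ x_k^{β_k} − x_1^{α_1} ⋯ x_k^{α_k}. If the symmetrization f_sym is nonnegative on ℝ^k, then for every a ∈ ℕ and every finite simple graph G, w_{α_1+2a}(G) ⋯ w_{α_k+2a}(G) ≤ w_{β_1+2a}(G) ⋯ w_{β_k+2a}(G), where w_j(G) denotes the number of walks of length j in G. -/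
/-!
By the spectral theorem, `w n := star u ⬝ᵥ A ^ n *ᵥ u` is, for a Hermitian matrix `A`, the `n`-th
moment of a nonnegative weight on the eigenvalues of `A`. A product `∏ i, w (γ i)` is therefore the
average of the monomial `∏ i, x i ^ γ i` against a product weight. Product weights are invariant
under permutations of the coordinates, so averaging a function amounts, up to the factor `k!`, to
averaging its symmetrization. The shift by `2 * a` multiplies the symmetrization by the nonnegative
symmetric monomial `∏ i, x i ^ (2 * a)`, which reduces the inequality to `a = 0`.
-/

open Finset

open Matrix
open scoped Nat

section Symmetrization

variable {ι V R : Type*} [Fintype ι] [DecidableEq ι]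

/-- The symmetrization `f_sym` of a function of several variables: the sum, not the average, of the
functions obtained from `f` by permuting its variables. It is defined for functions on any power
`ι → V`, so that it commutes with substitutions `x = l ∘ p`. -/
def symmetrization [AddCommMonoid R] (f : (ι → V) → R) (x : ι → V) : R :=
  ∑ σ : Equiv.Perm ι, f (x ∘ σ)

theorem symmetrization_prod_mul [CommSemiring R] (g : V → R) (f : (ι → V) → R) (x : ι → V) :
    symmetrization (fun y => (∏ i, g (y i)) * f y) x = (∏ i, g (x i)) * symmetrization f x := by
  have prod_comp_perm (σ : Equiv.Perm ι) : ∏ i, g ((x ∘ σ) i) = ∏ i, g (x i) :=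
    Equiv.prod_comp σ fun i => g (x i)
  simp only [symmetrization, prod_comp_perm, mul_sum]

theorem sum_symmetrization [Fintype V] [AddCommMonoid R] (f : (ι → V) → R) :
    ∑ p, symmetrization f p = (Fintype.card ι)! • ∑ p, f p := by
  have sum_comp_perm (σ : Equiv.Perm ι) : ∑ p : ι → V, f (p ∘ σ) = ∑ p, f p :=
    (Equiv.arrowCongr σ.symm (Equiv.refl V)).sum_comp f
  simp only [symmetrization]
  rw [sum_comm, sum_congr rfl fun σ _ => sum_comp_perm σ, sum_const, card_univ, Fintype.card_perm]

theorem sum_nonneg_of_symmetrization_nonneg [Fintype V] [AddCommMonoid R] [LinearOrder R]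
    [IsOrderedCancelAddMonoid R] {f : (ι → V) → R} (hf : ∀ p, 0 ≤ symmetrization f p) :
    0 ≤ ∑ p, f p := by
  refine (nsmul_nonneg_iff (Nat.factorial_ne_zero (Fintype.card ι))).mp ?_
  rw [← sum_symmetrization]
  exact sum_nonneg fun p _ => hf p

end Symmetrization

section Moments

variable {ι V R : Type*} [Fintype ι] [DecidableEq ι]

theorem prod_sum_mul_pow [Fintype V] [CommSemiring R] (c l : V → R) (γ : ι → ℕ) :
    ∏ i, ∑ v, c v * l v ^ γ i = ∑ p : ι → V, (∏ i, c (p i)) * ∏ i, l (p i) ^ γ i := by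
  simp only [Fintype.prod_sum, prod_mul_distrib]

variable [CommRing R] [LinearOrder R] [IsStrictOrderedRing R] {α β : ι → ℕ}

theorem prod_moment_le_prod_moment [Fintype V] {c : V → R} (hc : ∀ v, 0 ≤ c v) (l : V → R)
    (h : ∀ x : ι → R, 0 ≤ symmetrization (fun y => ∏ i, y i ^ β i - ∏ i, y i ^ α i) x) :
    ∏ i, ∑ v, c v * l v ^ α i ≤ ∏ i, ∑ v, c v * l v ^ β i := by
  rw [← sub_nonneg]
  simp only [prod_sum_mul_pow, ← sum_sub_distrib, ← mul_sub]
  refine sum_nonneg_of_symmetrization_nonneg fun p => ?_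
  rw [symmetrization_prod_mul]
  exact mul_nonneg (prod_nonneg fun i _ => hc (p i)) (h (l ∘ p))

theorem symmetrization_shift_nonneg
    (h : ∀ x : ι → R, 0 ≤ symmetrization (fun y => ∏ i, y i ^ β i - ∏ i, y i ^ α i) x)
    {b : ℕ} (hb : Even b) (x : ι → R) :
    0 ≤ symmetrization (fun y => ∏ i, y i ^ (β i + b) - ∏ i, y i ^ (α i + b)) x := by
  have factor (y : ι → R) : ∏ i, y i ^ (β i + b) - ∏ i, y i ^ (α i + b) =
      (∏ i, y i ^ b) * (∏ i, y i ^ β i - ∏ i, y i ^ α i) := by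
    simp only [pow_add, prod_mul_distrib]
    ring
  simp only [factor]
  rw [symmetrization_prod_mul (· ^ b)]
  exact mul_nonneg (prod_nonneg fun i _ => hb.pow_nonneg (x i)) (h x)

end Moments

section HermitianMatrices

variable {𝕜 V : Type*} [RCLike 𝕜] [Fintype V] [DecidableEq V] {A : Matrix V V 𝕜}

theorem pow_eq_eigenvectorUnitary_mul_diagonal_mul_star (hA : A.IsHermitian) (n : ℕ) :
    A ^ n = hA.eigenvectorUnitary * diagonal (fun v => (hA.eigenvalues v : 𝕜) ^ n) *
      star (hA.eigenvectorUnitary : Matrix V V 𝕜) := by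
  conv_lhs => rw [hA.spectral_theorem, ← map_pow, Unitary.conjStarAlgAut_apply, diagonal_pow]
  rfl

theorem star_dotProduct_conj_diagonal_mulVec (U : Matrix V V 𝕜) (d u : V → 𝕜) :
    star u ⬝ᵥ (U * diagonal d * star U) *ᵥ u = ∑ v, (‖(star U *ᵥ u) v‖ : 𝕜) ^ 2 * d v :=
  calc star u ⬝ᵥ (U * diagonal d * star U) *ᵥ u
      = star (star U *ᵥ u) ⬝ᵥ diagonal d *ᵥ (star U *ᵥ u) := by
        rw [star_mulVec, star_eq_conjTranspose, conjTranspose_conjTranspose, ← dotProduct_mulVec,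
          mulVec_mulVec, mulVec_mulVec, mul_assoc]
    _ = ∑ v, (‖(star U *ᵥ u) v‖ : 𝕜) ^ 2 * d v := by
        refine sum_congr rfl fun v _ => ?_
        rw [mulVec_diagonal, Pi.star_apply, ← RCLike.conj_mul, starRingEnd_apply]
        ring

theorem re_star_dotProduct_pow_mulVec (hA : A.IsHermitian) (u : V → 𝕜) (n : ℕ) :
    RCLike.re (star u ⬝ᵥ A ^ n *ᵥ u) =
      ∑ v, ‖(star (hA.eigenvectorUnitary : Matrix V V 𝕜) *ᵥ u) v‖ ^ 2 * hA.eigenvalues v ^ n := by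
  rw [pow_eq_eigenvectorUnitary_mul_diagonal_mul_star hA, star_dotProduct_conj_diagonal_mulVec]
  simp only [← RCLike.ofReal_pow, ← RCLike.ofReal_mul, ← RCLike.ofReal_sum, RCLike.ofReal_re]

theorem walk_shift_inequality_general {ι : Type*} [Fintype ι] [DecidableEq ι] {α β : ι → ℕ}
    (hsym : ∀ x : ι → ℝ, 0 ≤ symmetrization (fun y => ∏ i, y i ^ β i - ∏ i, y i ^ α i) x)
    (a : ℕ) (hA : A.IsHermitian) (u : V → 𝕜) :
    ∏ i, RCLike.re (star u ⬝ᵥ A ^ (α i + 2 * a) *ᵥ u) ≤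
      ∏ i, RCLike.re (star u ⬝ᵥ A ^ (β i + 2 * a) *ᵥ u) := by
  simp only [re_star_dotProduct_pow_mulVec hA]
  exact prod_moment_le_prod_moment (fun v => sq_nonneg _) hA.eigenvalues
    (symmetrization_shift_nonneg hsym (even_two_mul a))

end HermitianMatrices

theorem walkNum_eq_one_dotProduct_pow_mulVec_one {V : Type*} [Fintype V] [DecidableEq V]
    (G : SimpleGraph V) [DecidableRel G.Adj] (n : ℕ) :
    walkNum G n = 1 ⬝ᵥ G.adjMatrix ℝ ^ n *ᵥ 1 := by
  simp [walkNum, mulVec, dotProduct]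

theorem walk_shift_inequality {k : ℕ} (α β : Fin k → ℕ)
    (hsym : ∀ x : Fin k → ℝ,
      0 ≤ ∑ σ : Equiv.Perm (Fin k),
        ((∏ i, x (σ i) ^ β i) - ∏ i, x (σ i) ^ α i))
    (a : ℕ)
    (V : Type) [Fintype V] [DecidableEq V] (G : SimpleGraph V) [DecidableRel G.Adj] :
    ∏ i, walkNum G (α i + 2 * a) ≤ ∏ i, walkNum G (β i + 2 * a) := by
  simpa only [walkNum_eq_one_dotProduct_pow_mulVec_one, star_one, RCLike.re_to_real] using
    walk_shift_inequality_general hsym a (G.isHermitian_adjMatrix (R := ℝ)) 1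
end
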